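/- The set of functions of the form (x,y) ↦ Σ_{k=1}^n λ_k · (1/(2π))·exp(-((x-a_k)² + (y-b_k)²)/2) restricted to ℝ≥0², with n ∈ ℕ, λ_k, a_k, b_k ∈ ℝ, is dense in L¹(ℝ≥0²). -/

import Mathlib

/-!
Write `w (x, y) = exp (-(x² + y²) / 2)` and `T (x, y) = (exp (-x), exp (-y))`, which maps the quadrant
injectively into the unit square. For natural `m, n`, completing the square shows that
`w · exp (-m x - n y)` is a multiple of the Gaussian centred at `(-m, -n)`, so `w · (P ∘ T)` is a
linear combination of Gaussians for every polynomial `P` in two variables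
(`gaussComb_of_mem_adjoin`).

Given an integrable `f` on the quadrant, `f / w = F ∘ T` where `F` is integrable for the image under
`T` of the finite measure `w dx dy`. Continuous functions are dense in `L¹` of this measure, so
`f` is `L¹`-close to `w · (G ∘ T)` with `G` continuous. By Stone–Weierstrass, `G` is uniformly close
on the unit square to a polynomial `P`, and then `w · (G ∘ T)` is `L¹`-close to `w · (P ∘ T)` because
`w` is integrable. On the quadrant, this takes the place of Wiener's Tauberian theorem.
-/

open MeasureTheory Set Real

/-- `R` is a finite linear combination of translates of the standard Gaussian density on `ℝ²`. -/
def IsGaussComb (R : ℝ × ℝ → ℝ) : Prop :=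
  ∃ (n : ℕ) (l a b : Fin n → ℝ), ∀ p, R p = ∑ k : Fin n, l k * (1 / (2 * π))
    * Real.exp (-((p.1 - a k) ^ 2 + (p.2 - b k) ^ 2) / 2)

lemma IsGaussComb.zero : IsGaussComb (fun _ => 0) :=
  ⟨0, Fin.elim0, Fin.elim0, Fin.elim0, fun p => by simp⟩

lemma IsGaussComb.add {R S : ℝ × ℝ → ℝ} (hR : IsGaussComb R) (hS : IsGaussComb S) :
    IsGaussComb (fun p => R p + S p) := by
  obtain ⟨n, l, a, b, h⟩ := hR
  obtain ⟨n', l', a', b', h'⟩ := hS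
  refine ⟨n + n', Fin.append l l', Fin.append a a', Fin.append b b', fun p => ?_⟩
  simp only [Fin.sum_univ_add, Fin.append_left, Fin.append_right, h p, h' p]

lemma IsGaussComb.smul {R : ℝ × ℝ → ℝ} (c : ℝ) (hR : IsGaussComb R) :
    IsGaussComb (fun p => c * R p) := by
  obtain ⟨n, l, a, b, h⟩ := hR
  refine ⟨n, fun k => c * l k, a, b, fun p => ?_⟩
  simp only [h p, Finset.mul_sum, mul_assoc]

lemma integrable_gauss (a b : ℝ) :
    Integrable (fun p : ℝ × ℝ => Real.exp (-((p.1 - a) ^ 2 + (p.2 - b) ^ 2) / 2)) := by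
  have h : ∀ c : ℝ, Integrable (fun x : ℝ => Real.exp (-(1 / 2) * (x - c) ^ 2)) := fun c =>
    (integrable_exp_neg_mul_sq (b := 1 / 2) (by norm_num)).comp_sub_right c
  refine ((h a).mul_prod (h b)).congr (Filter.Eventually.of_forall fun p => ?_)
  simp only [← Real.exp_add]
  congr 1
  ring

lemma IsGaussComb.integrable {R : ℝ × ℝ → ℝ} (hR : IsGaussComb R) : Integrable R := by
  obtain ⟨n, l, a, b, h⟩ := hR
  rw [show R = _ from funext h]
  exact integrable_finsetSum _ fun k _ => (integrable_gauss _ _).const_mul _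

/-- The Gaussian weight `exp (-(x² + y²) / 2)`. -/
noncomputable def gaussWeight (p : ℝ × ℝ) : ℝ := Real.exp (-(p.1 ^ 2 + p.2 ^ 2) / 2)

/-- The map `(x, y) ↦ (exp (-x), exp (-y))`, sending the quadrant into the unit square. -/
noncomputable def expMap (p : ℝ × ℝ) : ℝ × ℝ := (Real.exp (-p.1), Real.exp (-p.2))

lemma continuous_gaussWeight : Continuous gaussWeight := by unfold gaussWeight; fun_prop

lemma continuous_expMap : Continuous expMap := by unfold expMap; fun_prop

lemma gaussWeight_pos (p : ℝ × ℝ) : 0 < gaussWeight p := Real.exp_pos _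

lemma integrable_gaussWeight : Integrable gaussWeight := by
  have h := integrable_gauss 0 0
  simp only [sub_zero] at h
  exact h

/-- The closed unit square in `ℝ²`. -/
abbrev UnitSquare : Set (ℝ × ℝ) := Icc (0, 0) (1, 1)

lemma expMap_mem {p : ℝ × ℝ} (hp : p ∈ Set.Ici (0 : ℝ) ×ˢ Set.Ici (0 : ℝ)) :
    expMap p ∈ UnitSquare := by
  obtain ⟨h1, h2⟩ := hp
  simp only [mem_Ici] at h1 h2
  exact ⟨⟨(Real.exp_pos _).le, (Real.exp_pos _).le⟩,
    ⟨Real.exp_le_one_iff.2 (by simpa using h1), Real.exp_le_one_iff.2 (by simpa using h2)⟩⟩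

/-- First coordinate on the unit square. -/
def coordX : C(UnitSquare, ℝ) := ⟨fun z => z.1.1, by fun_prop⟩

/-- Second coordinate on the unit square. -/
def coordY : C(UnitSquare, ℝ) := ⟨fun z => z.1.2, by fun_prop⟩

/-- Completing the square: the weight times a monomial in `exp (-x)`, `exp (-y)` is a multiple of a
translated Gaussian. -/
lemma isGaussComb_monomial (m n : ℕ) :
    IsGaussComb (fun p => gaussWeight p * ((expMap p).1 ^ m * (expMap p).2 ^ n)) := by
  refine ⟨1, fun _ => 2 * π * Real.exp ((m ^ 2 + n ^ 2) / 2), fun _ => -m, fun _ => -n,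
    fun p => ?_⟩
  have hpi : 2 * π ≠ 0 := by positivity
  simp only [gaussWeight, expMap, ← Real.exp_nat_mul, ← Real.exp_add, Finset.univ_unique,
    Finset.sum_singleton]
  rw [show ∀ A B : ℝ, 2 * π * A * (1 / (2 * π)) * B = A * B by intros; field_simp,
    ← Real.exp_add]
  congr 1
  ring

lemma gaussComb_of_mem_adjoin {q : C(UnitSquare, ℝ)}
    (hq : q ∈ Algebra.adjoin ℝ {coordX, coordY}) :
    ∃ R, IsGaussComb R ∧ ∀ p (hp : expMap p ∈ UnitSquare),
      R p = gaussWeight p * q ⟨expMap p, hp⟩ := by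
  rw [← Subalgebra.mem_toSubmodule, Algebra.adjoin_eq_span] at hq
  induction hq using Submodule.span_induction with
  | mem q hq =>
    obtain ⟨m, n, rfl⟩ := (Submonoid.mem_closure_pair _ _ _).1 hq
    exact ⟨_, isGaussComb_monomial m n, fun p hp => by simp [coordX, coordY]⟩
  | zero => exact ⟨_, .zero, fun p hp => by simp⟩
  | add q r _ _ h h' =>
    obtain ⟨R, hR, h⟩ := h
    obtain ⟨S, hS, h'⟩ := h'
    exact ⟨_, hR.add hS, fun p hp => by simp [h p hp, h' p hp, mul_add]⟩
  | smul c q _ h =>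
    obtain ⟨R, hR, h⟩ := h
    exact ⟨_, hR.smul c, fun p hp => by simp [h p hp, mul_left_comm]⟩

/-- Stone–Weierstrass on the unit square, transported to the quadrant. -/
lemma exists_gaussComb_near {G : ℝ × ℝ → ℝ} (hG : Continuous G) {ε : ℝ} (hε : 0 < ε) :
    ∃ R, IsGaussComb R ∧ ∀ p ∈ Set.Ici (0 : ℝ) ×ˢ Set.Ici (0 : ℝ),
      ‖gaussWeight p * G (expMap p) - R p‖ ≤ ε * gaussWeight p := by
  have hsep : (Algebra.adjoin ℝ {coordX, coordY}).SeparatesPoints := by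
    intro x y hxy
    by_cases h : x.1.1 = y.1.1
    · have h2 : x.1.2 ≠ y.1.2 := fun h2 => hxy (Subtype.ext (Prod.ext h h2))
      exact ⟨_, ⟨coordY, Algebra.subset_adjoin (by simp), rfl⟩, h2⟩
    · exact ⟨_, ⟨coordX, Algebra.subset_adjoin (by simp), rfl⟩, h⟩
  obtain ⟨⟨q, hq⟩, hqG⟩ :=
    ContinuousMap.exists_mem_subalgebra_near_continuous_of_separatesPoints
      (Algebra.adjoin ℝ {coordX, coordY}) hsep (fun z : UnitSquare => G z) (by fun_prop) ε hε
  obtain ⟨R, hR, h⟩ := gaussComb_of_mem_adjoin hq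
  refine ⟨R, hR, fun p hp => ?_⟩
  have := (hqG ⟨expMap p, expMap_mem hp⟩).le
  simp only at this
  rw [h p (expMap_mem hp), ← mul_sub, norm_mul, Real.norm_of_nonneg (gaussWeight_pos p).le,
    mul_comm, norm_sub_rev]
  exact mul_le_mul_of_nonneg_right this (gaussWeight_pos p).le

/-- Density of continuous functions in `L¹` of the image of `gaussWeight • μ` under `expMap`,
transported back along `expMap`. -/
lemma exists_continuous_near {μ : Measure (ℝ × ℝ)} (hw : Integrable gaussWeight μ)
    {f : ℝ × ℝ → ℝ} (hfm : StronglyMeasurable f) (hf : Integrable f μ) {ε : ENNReal} (hε : ε ≠ 0) :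
    ∃ G : ℝ × ℝ → ℝ, Continuous G ∧
      ∫⁻ p, ‖f p - gaussWeight p * G (expMap p)‖ₑ ∂μ ≤ ε := by
  set ρ := μ.withDensity (fun p => ENNReal.ofReal (gaussWeight p))
  have hρ : IsFiniteMeasure ρ := isFiniteMeasure_withDensity_ofReal hw.2
  let L : ℝ × ℝ → ℝ × ℝ := fun z => (-Real.log z.1, -Real.log z.2)
  have hL : Measurable L := by fun_prop
  have hLT : ∀ p, L (expMap p) = p := fun p => by simp [L, expMap]
  let F : ℝ × ℝ → ℝ := fun z => f (L z) / gaussWeight (L z)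
  have hFm : Measurable F :=
    (hfm.measurable.comp hL).div (continuous_gaussWeight.measurable.comp hL)
  have hwm : Measurable fun p => ENNReal.ofReal (gaussWeight p) :=
    continuous_gaussWeight.measurable.ennreal_ofReal
  have hcov : ∀ g : ℝ × ℝ → ℝ, Measurable g →
      ∫⁻ z, ‖g z‖ₑ ∂(ρ.map expMap) = ∫⁻ p, ‖gaussWeight p * g (expMap p)‖ₑ ∂μ := by
    intro g hg
    rw [lintegral_map hg.enorm continuous_expMap.measurable,
      lintegral_withDensity_eq_lintegral_mul _ hwm
        (show Measurable fun p => ‖g (expMap p)‖ₑ from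
          (hg.comp continuous_expMap.measurable).enorm)]
    refine lintegral_congr fun p => ?_
    simp [enorm_mul, Real.enorm_of_nonneg (gaussWeight_pos p).le]
  have hwF : ∀ p, gaussWeight p * F (expMap p) = f p := fun p => by
    simp only [F, hLT]
    exact mul_div_cancel₀ _ (gaussWeight_pos p).ne'
  have hF : Integrable F (ρ.map expMap) := by
    refine ⟨hFm.aestronglyMeasurable, ?_⟩
    rw [HasFiniteIntegral, hcov F hFm]
    simp only [hwF]
    exact hf.2
  obtain ⟨G, hG, -⟩ := hF.exists_boundedContinuous_lintegral_sub_le hε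
  refine ⟨G, G.continuous, ?_⟩
  have := hcov (fun z => F z - G z) (hFm.sub G.continuous.measurable)
  simp only [mul_sub, hwF] at this
  rwa [← this]

theorem gaussian_combinations_dense_L1_quadrant :
    Dense {F : Lp ℝ 1 ((volume : Measure (ℝ × ℝ)).restrict (Set.Ici 0 ×ˢ Set.Ici 0)) |
      ∃ (n : ℕ) (l a b : Fin n → ℝ),
        ∀ᵐ p ∂((volume : Measure (ℝ × ℝ)).restrict (Set.Ici 0 ×ˢ Set.Ici 0)),
          (F : ℝ × ℝ → ℝ) p
            = ∑ k : Fin n, l k * (1 / (2 * π))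
                * Real.exp (-((p.1 - a k) ^ 2 + (p.2 - b k) ^ 2) / 2)} := by
  set μ := (volume : Measure (ℝ × ℝ)).restrict (Set.Ici 0 ×ˢ Set.Ici 0)
  intro f
  have hw : Integrable gaussWeight μ := integrable_gaussWeight.restrict
  have hf : Integrable f μ := L1.integrable_coeFn f
  rw [EMetric.mem_closure_iff]
  intro ε hε
  obtain ⟨δ, hδ, hδε⟩ : ∃ δ : ENNReal, 0 < δ ∧ δ + δ < ε := by
    obtain ⟨η, hη, hηε⟩ := exists_between hε
    exact ⟨η / 2, ENNReal.half_pos hη.ne', by rwa [ENNReal.add_halves]⟩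
  obtain ⟨G, hG, hfG⟩ := exists_continuous_near hw (Lp.stronglyMeasurable f) hf hδ.ne'
  obtain ⟨c, hc, hcδ⟩ : ∃ c : ℝ, 0 < c ∧ ENNReal.ofReal c * ∫⁻ p, ‖gaussWeight p‖ₑ ∂μ ≤ δ := by
    obtain ⟨c, hc, h⟩ := ENNReal.exists_nnreal_pos_mul_lt hw.2.ne hδ.ne'
    exact ⟨c, hc, by simpa using h.le⟩
  obtain ⟨R, hR, hGR⟩ := exists_gaussComb_near hG hc
  have hRi : Integrable R μ := hR.integrable.restrict
  refine ⟨hRi.toL1 R, ?_, ?_⟩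
  · obtain ⟨n, l, a, b, h⟩ := hR
    exact ⟨n, l, a, b, hRi.coeFn_toL1.trans (Filter.Eventually.of_forall h)⟩
  · have hGR' : ∫⁻ p, ‖gaussWeight p * G (expMap p) - R p‖ₑ ∂μ ≤ δ := by
      refine le_trans ?_ hcδ
      rw [← lintegral_const_mul' _ _ ENNReal.ofReal_ne_top]
      refine setLIntegral_mono' (measurableSet_Ici.prod measurableSet_Ici) fun p hp => ?_
      rw [Real.enorm_of_nonneg (gaussWeight_pos p).le, ← ENNReal.ofReal_mul hc.le,
        ← ofReal_norm]
      exact ENNReal.ofReal_le_ofReal (hGR p hp)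
    rw [← Integrable.toL1_coeFn f hf, Integrable.edist_toL1_toL1]
    refine lt_of_le_of_lt ?_ hδε
    calc ∫⁻ p, edist (f p) (R p) ∂μ
        ≤ ∫⁻ p, (‖f p - gaussWeight p * G (expMap p)‖ₑ
            + ‖gaussWeight p * G (expMap p) - R p‖ₑ) ∂μ := by
          refine lintegral_mono fun p => ?_
          simp only [← edist_eq_enorm_sub]
          exact edist_triangle _ _ _
      _ = _ := lintegral_add_left ((Lp.stronglyMeasurable f).measurable.sub
          (continuous_gaussWeight.mul (hG.comp continuous_expMap)).measurable).enorm _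
      _ ≤ δ + δ := add_le_add hfG hGR'
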